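/- Let X be a nonempty, compact, convex subset of ℝⁿ and let E : X → ℝⁿ be continuous and strict-properly quasimonotone. Then the variational inequality VI(E, X) has a unique solution: there exists a unique p* ∈ X such that ⟪E(p*), p − p*⟫ ≥ 0 for all p ∈ X. -/

import Mathlib

/-!
Strict proper quasimonotonicity says in particular that the half-spaces
`G p = {q | 0 ≤ ⟪E p, p - q⟫}` form a KKM family: the convex hull of any finite set `s ⊆ X` is
covered by the `G p`, `p ∈ s`. Because the `G p` are *convex*, no fixed-point theorem is needed:
Klee's intersection theorem (`klee_intersection`), which follows from Hahn-Banach separation by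
induction on the number of sets, shows that finitely many of them meet inside `X`
(`exists_finite_minty`). Compactness of `X` gives a point `q ∈ X` lying in every `G p`, that is, a
solution of the Minty inequality; continuity of `E` along segments issuing from `q` turns it into a
solution of the variational inequality. Two distinct solutions would contradict the hypothesis at
their midpoint.
-/

open RealInnerProductSpace

theorem exists_level_of_convex {V : Type*} [NormedAddCommGroup V] [NormedSpace ℝ V]
    {S : Set V} (hS : Convex ℝ S) (f : V →L[ℝ] ℝ) {x y : V} (hx : x ∈ S) (hy : y ∈ S) {u : ℝ}
    (hxu : f x ≤ u) (huy : u ≤ f y) : ∃ z ∈ S, f z = u :=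
  hS.isPreconnected.intermediate_value hx hy f.continuous.continuousOn ⟨hxu, huy⟩

/-- **Klee's intersection theorem**: if finitely many compact convex sets have a nonempty convex
union, and any subfamily omitting one of them has a common point, then they all have a common
point. The nonemptiness of the union only matters for a one-element family. -/
theorem klee_intersection {ι V : Type*} [DecidableEq ι] [NormedAddCommGroup V] [NormedSpace ℝ V]
    (s : Finset ι) : ∀ C : ι → Set V, (∀ i ∈ s, IsCompact (C i)) → (∀ i ∈ s, Convex ℝ (C i)) →
      Convex ℝ (⋃ i ∈ s, C i) → (⋃ i ∈ s, C i).Nonempty →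
      (∀ j ∈ s, ∃ x, ∀ i ∈ s, i ≠ j → x ∈ C i) → ∃ x, ∀ i ∈ s, x ∈ C i := by
  induction s using Finset.induction_on with
  | empty => intro C _ _ _ hne _; exact ⟨hne.some, by simp⟩
  | insert a t hat ih =>
    intro C hcomp hconv hU hne hmeet
    rcases t.eq_empty_or_nonempty with rfl | ⟨b, hb⟩
    · obtain ⟨x, hx⟩ := hne
      exact ⟨x, by simpa using hx⟩
    by_contra! hno
    have haU : a ∈ insert a t := Finset.mem_insert_self a t
    have htU : ∀ {i}, i ∈ t → i ∈ insert a t := fun h => Finset.mem_insert_of_mem h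
    have hta : ∀ {i}, i ∈ t → i ≠ a := fun h h' => hat (h' ▸ h)
    obtain ⟨y, hy⟩ := hmeet a haU
    obtain ⟨x, hx⟩ := hmeet b (htU hb)
    have hxa : x ∈ C a := hx a haU (hta hb).symm
    have hDconv : Convex ℝ (⋂ i ∈ t, C i) :=
      convex_iInter₂ fun i hi => hconv i (htU hi)
    have hDclosed : IsClosed (⋂ i ∈ t, C i) :=
      isClosed_biInter fun i hi => (hcomp i (htU hi)).isClosed
    have hdisj : Disjoint (C a) (⋂ i ∈ t, C i) := by
      rw [Set.disjoint_left]
      intro z hza hz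
      obtain ⟨i, hi, hzi⟩ := hno z
      rcases Finset.mem_insert.1 hi with rfl | hi
      · exact hzi hza
      · exact hzi (Set.mem_iInter₂.1 hz i hi)
    obtain ⟨f, u, v, hfa, huv, hfD⟩ := geometric_hahn_banach_compact_closed
      (hconv a haU) (hcomp a haU) hDconv hDclosed hdisj
    have hD : ∀ z, (∀ i ∈ t, z ∈ C i) → u < f z := fun z hz =>
      huv.trans (hfD z (Set.mem_iInter₂.2 hz))
    have hyt : ∀ i ∈ t, y ∈ C i := fun i hi => hy i (htU hi) (hta hi)
    have hHconv : Convex ℝ {z | f z = u} := convex_hyperplane f.toLinearMap.isLinear u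
    have hHclosed : IsClosed {z | f z = u} := isClosed_eq f.continuous continuous_const
    -- The separating hyperplane misses `C a`, so its trace on the union only involves `t`.
    have hUeq : (⋃ i ∈ t, C i ∩ {z | f z = u}) = (⋃ i ∈ insert a t, C i) ∩ {z | f z = u} := by
      ext z
      simp only [Set.mem_iUnion, Set.mem_inter_iff, Set.mem_ofPred_eq, exists_prop]
      constructor
      · rintro ⟨i, hi, hz, hzu⟩
        exact ⟨⟨i, htU hi, hz⟩, hzu⟩
      · rintro ⟨⟨i, hi, hz⟩, hzu⟩
        rcases Finset.mem_insert.1 hi with rfl | hi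
        · exact absurd hzu (hfa z hz).ne
        · exact ⟨i, hi, hz, hzu⟩
    obtain ⟨z, hz⟩ := ih (fun i => C i ∩ {z | f z = u})
      (fun i hi => (hcomp i (htU hi)).inter_right hHclosed)
      (fun i hi => (hconv i (htU hi)).inter hHconv)
      (by rw [hUeq]; exact hU.inter hHconv)
      (by
        rw [hUeq]
        obtain ⟨z, hz, hzu⟩ := exists_level_of_convex hU f
          (Set.mem_iUnion₂.2 ⟨a, haU, hxa⟩) (Set.mem_iUnion₂.2 ⟨b, htU hb, hyt b hb⟩)
          (hfa x hxa).le (hD y hyt).le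
        exact ⟨z, hz, hzu⟩)
      (by
        -- `w ∈ C a` and `y` lie on opposite sides of the hyperplane.
        intro j hj
        obtain ⟨w, hw⟩ := hmeet j (htU hj)
        have hconvj : Convex ℝ (⋂ i ∈ t.erase j, C i) :=
          convex_iInter₂ fun i hi => hconv i (htU (Finset.mem_of_mem_erase hi))
        obtain ⟨z, hz, hzu⟩ := exists_level_of_convex hconvj f (x := w) (y := y) (u := u)
          (Set.mem_iInter₂.2 fun i hi =>
            hw i (htU (Finset.mem_of_mem_erase hi)) (Finset.ne_of_mem_erase hi))
          (Set.mem_iInter₂.2 fun i hi => hyt i (Finset.mem_of_mem_erase hi))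
          (hfa w (hw a haU (hta hj).symm)).le (hD y hyt).le
        exact ⟨z, fun i hi hij =>
          ⟨Set.mem_iInter₂.1 hz i (Finset.mem_erase.2 ⟨hij, hi⟩), hzu⟩⟩)
    exact (hD z fun i hi => (hz i hi).1).ne' (hz b hb).2

/-- Finite Minty inequalities are solvable for a properly quasimonotone map: Klee's theorem applied
to the traces of the half-spaces `{q | 0 ≤ ⟪E p, p - q⟫}` on the convex hull of `s`. -/
theorem exists_finite_minty {V : Type*} [NormedAddCommGroup V] [InnerProductSpace ℝ V]
    [DecidableEq V] (X : Set V) (E : V → V)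
    (hpqm : ∀ s : Finset V, s.Nonempty → ↑s ⊆ X → ∀ q ∈ convexHull ℝ (s : Set V),
      ∃ p ∈ s, 0 ≤ ⟪E p, p - q⟫) (s : Finset V) (hs : s.Nonempty) (hsX : ↑s ⊆ X) :
    ∃ q ∈ convexHull ℝ (s : Set V), ∀ p ∈ s, 0 ≤ ⟪E p, p - q⟫ := by
  induction s using Finset.strongInduction with
  | H s ih =>
    have hU : (⋃ p ∈ s, convexHull ℝ (s : Set V) ∩ {q | 0 ≤ ⟪E p, p - q⟫})
        = convexHull ℝ (s : Set V) := by
      apply Set.Subset.antisymm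
      · exact Set.iUnion₂_subset fun p _ => Set.inter_subset_left
      · intro q hq
        obtain ⟨p, hp, h⟩ := hpqm s hs hsX q hq
        exact Set.mem_iUnion₂.2 ⟨p, hp, hq, h⟩
    obtain ⟨q, hq⟩ := klee_intersection s
      (fun p => convexHull ℝ (s : Set V) ∩ {q | 0 ≤ ⟪E p, p - q⟫})
      (fun p _ => (s.finite_toSet.isCompact_convexHull (𝕜 := ℝ)).inter_right
        (isClosed_le continuous_const (by fun_prop)))
      (fun p _ => (convex_convexHull ℝ _).inter (by
        have := convex_halfSpace_le (𝕜 := ℝ) (innerₛₗ ℝ (E p)).isLinear ⟪E p, p⟫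
        simpa [inner_sub_right] using this))
      (by rw [hU]; exact convex_convexHull ℝ _)
      (by rw [hU]; exact (Finset.coe_nonempty.2 hs).convexHull)
      (by
        intro j hj
        rcases (s.erase j).eq_empty_or_nonempty with h | h
        · refine ⟨0, fun i hi hij => ?_⟩
          have := Finset.mem_erase.2 ⟨hij, hi⟩
          simp [h] at this
        · have hsub : ((s.erase j : Finset V) : Set V) ⊆ s :=
            Finset.coe_subset.2 (Finset.erase_subset j s)
          obtain ⟨q, hq, h'⟩ := ih _ (Finset.erase_ssubset hj) h (hsub.trans hsX)
          exact ⟨q, fun i hi hij =>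
            ⟨convexHull_mono hsub hq, h' i (Finset.mem_erase.2 ⟨hij, hi⟩)⟩⟩)
    obtain ⟨p, hp⟩ := hs
    exact ⟨q, (hq p hp).1, fun p hp => (hq p hp).2⟩

/-- Minty's lemma: for continuous `E`, a solution of the Minty inequality solves the variational
inequality. -/
theorem vi_of_minty {V : Type*} [NormedAddCommGroup V] [InnerProductSpace ℝ V]
    {X : Set V} (hconv : Convex ℝ X) {E : V → V} (hE : ContinuousOn E X) {q : V} (hq : q ∈ X)
    (h : ∀ p ∈ X, 0 ≤ ⟪E p, p - q⟫) : ∀ p ∈ X, 0 ≤ ⟪E q, p - q⟫ := by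
  intro p hp
  have hmem : ∀ t ∈ Set.Icc (0 : ℝ) 1, q + t • (p - q) ∈ X := fun t ht =>
    hconv.add_smul_sub_mem hq hp ht
  have hc : ContinuousOn (fun t : ℝ => ⟪E (q + t • (p - q)), p - q⟫) (Set.Icc 0 1) :=
    ContinuousOn.inner (𝕜 := ℝ) (hE.comp (by fun_prop) hmem) continuousOn_const
  have h0 : Filter.Tendsto (fun t : ℝ => ⟪E (q + t • (p - q)), p - q⟫)
      (nhdsWithin 0 (Set.Ioc 0 1)) (nhds ⟪E q, p - q⟫) := by
    have := (hc 0 (by simp)).mono Set.Ioc_subset_Icc_self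
    simpa [ContinuousWithinAt] using this
  have : (nhdsWithin (0 : ℝ) (Set.Ioc 0 1)).NeBot := by
    rw [nhdsWithin_Ioc_eq_nhdsGT one_pos]; infer_instance
  refine ge_of_tendsto h0 (eventually_nhdsWithin_of_forall fun t ht => ?_)
  have h1 := h _ (hmem t (Set.Ioc_subset_Icc_self ht))
  rw [add_sub_cancel_left, inner_smul_right] at h1
  exact nonneg_of_mul_nonneg_right h1 ht.1

/-- Paper's Theorem 4.3, (a) ⟹ (c): a continuous, strict-properly
quasimonotone map on a nonempty compact convex subset of ℝⁿ admits a unique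
solution of the variational inequality VI(E, X). -/
theorem vi_exists_unique_solution_of_strict_properly_quasimonotone
    (n : ℕ) (X : Set (EuclideanSpace ℝ (Fin n)))
    (hne : X.Nonempty) (hcomp : IsCompact X) (hconv : Convex ℝ X)
    (E : EuclideanSpace ℝ (Fin n) → EuclideanSpace ℝ (Fin n))
    (hE : ContinuousOn E X)
    (hspqm : ∀ (m : ℕ) (p : Fin m → EuclideanSpace ℝ (Fin n)),
      (∀ i, p i ∈ X) → ∀ q ∈ convexHull ℝ (Set.range p),
        (∀ i, q ≠ p i) → ∃ j, 0 < ⟪E (p j), p j - q⟫) :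
    ∃! p₀, p₀ ∈ X ∧ ∀ p ∈ X, 0 ≤ ⟪E p₀, p - p₀⟫ := by
  classical
  have hpqm : ∀ s : Finset (EuclideanSpace ℝ (Fin n)), s.Nonempty → ↑s ⊆ X →
      ∀ q ∈ convexHull ℝ (s : Set (EuclideanSpace ℝ (Fin n))), ∃ p ∈ s, 0 ≤ ⟪E p, p - q⟫ := by
    intro s _ hsX q hq
    by_cases hqs : q ∈ s
    · exact ⟨q, hqs, by simp⟩
    have hrange : Set.range (fun i => (s.equivFin.symm i : EuclideanSpace ℝ (Fin n))) = s := by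
      rw [show (fun i => (s.equivFin.symm i : EuclideanSpace ℝ (Fin n)))
        = Subtype.val ∘ s.equivFin.symm from rfl, s.equivFin.symm.surjective.range_comp]
      simp
    obtain ⟨j, hj⟩ := hspqm s.card (fun i => s.equivFin.symm i)
      (fun i => hsX (s.equivFin.symm i).2) q (by rw [hrange]; exact hq)
      (fun i hi => hqs (hi ▸ (s.equivFin.symm i).2))
    exact ⟨_, (s.equivFin.symm j).2, hj.le⟩
  obtain ⟨q, hq, hminty⟩ : (X ∩ ⋂ p : X, {q | 0 ≤ ⟪E p, (p : EuclideanSpace ℝ (Fin n)) - q⟫}).Nonempty := by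
    refine hcomp.inter_iInter_nonempty _
      (fun p => isClosed_le continuous_const (by fun_prop)) fun u => ?_
    rcases u.eq_empty_or_nonempty with rfl | hu
    · simpa using hne
    have hsX : ((u.image Subtype.val : Finset (EuclideanSpace ℝ (Fin n))) : Set _) ⊆ X := by
      intro x hx
      obtain ⟨y, _, rfl⟩ := Finset.mem_image.1 (Finset.mem_coe.1 hx)
      exact y.2
    obtain ⟨q, hq, h⟩ := exists_finite_minty X E hpqm _ (hu.image Subtype.val) hsX
    exact ⟨q, convexHull_min hsX hconv hq, Set.mem_iInter₂.2 fun p hp =>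
      h p (Finset.mem_image_of_mem _ hp)⟩
  refine ⟨q, ⟨hq, vi_of_minty hconv hE hq fun p hp => Set.mem_iInter.1 hminty ⟨p, hp⟩⟩, ?_⟩
  rintro r ⟨hr, hvr⟩
  have hvq := vi_of_minty hconv hE hq fun p hp => Set.mem_iInter.1 hminty ⟨p, hp⟩
  by_contra hrq
  have e1 : r - midpoint ℝ r q = (-(1 / 2 : ℝ)) • (q - r) := by
    rw [midpoint_eq_smul_add, invOf_eq_inv]; module
  have e2 : q - midpoint ℝ r q = (-(1 / 2 : ℝ)) • (r - q) := by
    rw [midpoint_eq_smul_add, invOf_eq_inv]; module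
  obtain ⟨j, hj⟩ := hspqm 2 ![r, q] (by simp [Fin.forall_fin_two, hr, hq]) (midpoint ℝ r q)
    (by
      rw [Matrix.range_cons, Matrix.range_cons, Matrix.range_empty, Set.union_empty,
        Set.singleton_union, convexHull_pair]
      exact midpoint_mem_segment r q)
    (by
      simp only [Fin.forall_fin_two, Matrix.cons_val_zero, Matrix.cons_val_one, ne_eq,
        midpoint_eq_left_iff, midpoint_eq_right_iff]
      exact ⟨hrq, hrq⟩)
  have h1 := hvr q hq
  have h2 := hvq r hr
  fin_cases j
  · simp only [Fin.zero_eta, Matrix.cons_val_zero, e1, inner_smul_right] at hj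
    linarith
  · simp only [Fin.mk_one, Matrix.cons_val_one, Matrix.cons_val_zero, e2, inner_smul_right] at hj
    linarith
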